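/- A k-tuple T = (T_1,…,T_k) ∈ D_f^m(H) is pure if and only if, for each i ∈ {1,…,k}, Φ_{f_i,T_i}^p(I) → 0 in the strong operator topology as p → ∞. -/

import Mathlib

open Filter Topology
open scoped InnerProductSpace Topology

noncomputable section

namespace NC

variable {H : Type*} [NormedAddCommGroup H] [InnerProductSpace ℂ H] [CompleteSpace H]

/-- The operator `X_w = X_{j_1} ⋯ X_{j_p}` associated with a word `w ∈ F_d⁺`. -/
def listProd {d : ℕ} (X : Fin d → (H →L[ℂ] H)) (w : List (Fin d)) : H →L[ℂ] H :=
  (w.map X).prod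

/-- `T_{1,β_1} ⋯ T_{k,β_k}` for a `k`-tuple of words `(β_1, …, β_k)`. -/
def tupleWord {k : ℕ} {n : Fin k → ℕ} (T : ∀ i, Fin (n i) → (H →L[ℂ] H))
    (w : ∀ i, List (Fin (n i))) : H →L[ℂ] H :=
  (List.ofFn fun i => listProd (T i) (w i)).prod

/-- the entries of `T_p` commute with the entries of `T_q` for `p ≠ q` -/
def CommutingTuples {k : ℕ} {n : Fin k → ℕ} (T : ∀ i, Fin (n i) → (H →L[ℂ] H)) : Prop :=
  ∀ i j, i ≠ j → ∀ p q, Commute (T i p) (T j q)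

/-- coefficients of a positive regular free holomorphic function in `d` noncommuting
indeterminates:  nonnegative coefficients, zero constant term, nonzero linear
coefficients, and finite radius-type limsup condition. -/
def PosRegCoeffs {d : ℕ} (c : List (Fin d) → ℝ) : Prop :=
  (∀ w, 0 ≤ c w) ∧ c [] = 0 ∧ (∀ j, 0 < c [j]) ∧
    ∃ C : ℝ, ∀ᶠ l : ℕ in atTop,
      (∑ w : Fin l → Fin d, (c (List.ofFn w)) ^ 2) ^ ((1 : ℝ) / (2 * l)) ≤ C

/-- partial sums of `Φ_{f,X}(Y) = Σ_{|w| ≥ 1} c_w X_w Y X_w^*` over words of length `≤ N` -/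
def phiPartial {d : ℕ} (c : List (Fin d) → ℝ) (X : Fin d → (H →L[ℂ] H))
    (Y : H →L[ℂ] H) (N : ℕ) : H →L[ℂ] H :=
  ∑ l ∈ Finset.Icc 1 N, ∑ w : Fin l → Fin d,
    ((c (List.ofFn w) : ℝ) : ℂ) •
      (listProd X (List.ofFn w) * Y * ContinuousLinearMap.adjoint (listProd X (List.ofFn w)))

/-- `Φ` is the map `Φ_{f,X}`, i.e. the WOT limit of the partial sums of
`Σ_{|w| ≥ 1} c_w X_w Y X_w^*`, for every `Y`. -/
def IsPhiMap {d : ℕ} (c : List (Fin d) → ℝ) (X : Fin d → (H →L[ℂ] H))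
    (Φ : Module.End ℂ (H →L[ℂ] H)) : Prop :=
  ∀ (Y : H →L[ℂ] H) (x y : H),
    Tendsto (fun N => ⟪(phiPartial c X Y N) x, y⟫_ℂ) atTop (𝓝 ⟪(Φ Y) x, y⟫_ℂ)

/-- `Δ_Φ^p := (id − Φ_1)^{p_1} ∘ ⋯ ∘ (id − Φ_k)^{p_k}` -/
def Delta {k : ℕ} (Φ : Fin k → Module.End ℂ (H →L[ℂ] H)) (p : Fin k → ℕ) :
    Module.End ℂ (H →L[ℂ] H) :=
  (List.ofFn fun i => (1 - Φ i) ^ (p i)).prod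

/-- `(id − Φ_1^{q_1}) ∘ ⋯ ∘ (id − Φ_k^{q_k})` -/
def DeltaPow {k : ℕ} (Φ : Fin k → Module.End ℂ (H →L[ℂ] H)) (q : Fin k → ℕ) :
    Module.End ℂ (H →L[ℂ] H) :=
  (List.ofFn fun i => 1 - (Φ i) ^ (q i)).prod

/-- membership in the noncommutative polydomain `D_f^m(H)`:  the coordinate tuples
commute with each other, the maps `Φ_{f_i,T_i}` are defined (as WOT limits),
`Φ_{f_i,T_i}(I) ≤ I`, and
`(id−Φ_{f_1,T_1})^{ε_1 m_1} ⋯ (id−Φ_{f_k,T_k})^{ε_k m_k}(I) ≥ 0` for all `ε_i ∈ {0,1}`. -/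
def MemPolydomain {k : ℕ} {n : Fin k → ℕ} (a : ∀ i, List (Fin (n i)) → ℝ)
    (m : Fin k → ℕ) (T : ∀ i, Fin (n i) → (H →L[ℂ] H)) : Prop :=
  CommutingTuples T ∧
  ∃ Φ : Fin k → Module.End ℂ (H →L[ℂ] H),
    (∀ i, IsPhiMap (a i) (T i) (Φ i)) ∧
    (∀ i, ((1 : H →L[ℂ] H) - Φ i 1).IsPositive) ∧
    (∀ ε : Fin k → Bool, ((Delta Φ fun i => if ε i then m i else 0) 1).IsPositive)

/-- purity of a tuple `T`, expressed through its `Φ`-maps: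
`(id−Φ_k^{q_k}) ⋯ (id−Φ_1^{q_1})(I) → I`. -/
def IsPure {k : ℕ} (Φ : Fin k → Module.End ℂ (H →L[ℂ] H)) : Prop :=
  ∀ x : H, Tendsto (fun q : Fin k → ℕ => ((DeltaPow Φ q) 1) x) atTop (𝓝 x)

end NC

namespace NC

section

variable {H : Type*} [NormedAddCommGroup H] [InnerProductSpace ℂ H]

theorem nonneg_iff_inner (A : H →L[ℂ] H) :
    0 ≤ A ↔ ∀ x, 0 ≤ (⟪A x, x⟫_ℂ).re ∧ (⟪A x, x⟫_ℂ).im = 0 := by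
  rw [ContinuousLinearMap.nonneg_iff_isPositive, ContinuousLinearMap.isPositive_iff_complex]
  refine forall_congr' fun x => ?_
  rw [and_comm]
  simp [Complex.ext_iff, eq_comm]

theorem nonneg_of_tendsto_inner {u : ℕ → (H →L[ℂ] H)} {A : H →L[ℂ] H}
    (hu : ∀ᶠ N in atTop, 0 ≤ u N)
    (h : ∀ x y : H, Tendsto (fun N => ⟪u N x, y⟫_ℂ) atTop (𝓝 ⟪A x, y⟫_ℂ)) : 0 ≤ A := by
  rw [nonneg_iff_inner]
  intro x
  constructor
  · refine ge_of_tendsto ((Complex.continuous_re.tendsto _).comp (h x x)) ?_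
    filter_upwards [hu] with N hN using ((nonneg_iff_inner _).1 hN x).1
  · refine tendsto_nhds_unique ((Complex.continuous_im.tendsto _).comp (h x x)) ?_
    refine tendsto_const_nhds.congr' ?_
    filter_upwards [hu] with N hN using ((nonneg_iff_inner _).1 hN x).2.symm

theorem pow_map_nonneg {Φ : Module.End ℂ (H →L[ℂ] H)} (hΦ : ∀ Y, 0 ≤ Y → 0 ≤ Φ Y) (p : ℕ) (Y : H →L[ℂ] H) (hY : 0 ≤ Y) :
    0 ≤ (Φ ^ p) Y := by
  induction p with
  | zero => simpa
  | succ p ih => rw [pow_succ']; exact hΦ _ ih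

theorem nonneg_of_forall_nsmul {A B : H →L[ℂ] H} (h : ∀ n : ℕ, 0 ≤ n • A + B) : 0 ≤ A := by
  refine nonneg_of_tendsto_inner
    (u := fun n : ℕ => (((n : ℝ)⁻¹ : ℝ) : ℂ) • (n • A + B)) (.of_forall fun n => ?_) ?_
  · have := h n
    rw [ContinuousLinearMap.nonneg_iff_isPositive] at this ⊢
    refine this.smul_of_nonneg ?_
    exact_mod_cast inv_nonneg.2 n.cast_nonneg
  · intro x y
    have h0 : Tendsto (fun n : ℕ => (((n : ℝ)⁻¹ : ℝ) : ℂ)) atTop (𝓝 0) := by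
      have := (Complex.continuous_ofReal.tendsto 0).comp
        (tendsto_inv_atTop_nhds_zero_nat (𝕜 := ℝ))
      simpa [Function.comp_def] using this
    have h2 := (h0.mul_const ⟪B x, y⟫_ℂ).const_add ⟪A x, y⟫_ℂ
    rw [zero_mul, add_zero] at h2
    refine h2.congr' ?_
    filter_upwards [eventually_ge_atTop 1] with n hn
    have hn' : (n : ℂ) ≠ 0 := by exact_mod_cast (Nat.one_le_iff_ne_zero.1 hn)
    rw [← Nat.cast_smul_eq_nsmul ℂ]
    simp [hn']
    field_simp

variable [CompleteSpace H]

theorem phiPartial_term_nonneg {d : ℕ} {c : List (Fin d) → ℝ} (hc : ∀ w, 0 ≤ c w)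
    (X : Fin d → (H →L[ℂ] H)) {Y : H →L[ℂ] H} (hY : 0 ≤ Y) (w : List (Fin d)) :
    0 ≤ ((c w : ℝ) : ℂ) •
      (listProd X w * Y * ContinuousLinearMap.adjoint (listProd X w)) := by
  rw [ContinuousLinearMap.nonneg_iff_isPositive] at hY ⊢
  refine ContinuousLinearMap.IsPositive.smul_of_nonneg ?_ ?_
  · simpa [ContinuousLinearMap.mul_def, ContinuousLinearMap.comp_assoc]
      using hY.conj_adjoint (listProd X w)
  · exact_mod_cast hc w

theorem phiPartial_mono {d : ℕ} {c : List (Fin d) → ℝ} (hc : ∀ w, 0 ≤ c w)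
    (X : Fin d → (H →L[ℂ] H)) {Y : H →L[ℂ] H} (hY : 0 ≤ Y) :
    Monotone (phiPartial c X Y) := by
  intro N M hNM
  refine Finset.sum_le_sum_of_subset_of_nonneg (Finset.Icc_subset_Icc_right hNM) ?_
  exact fun l _ _ => Finset.sum_nonneg fun w _ => phiPartial_term_nonneg hc X hY _

theorem phiPartial_nonneg {d : ℕ} {c : List (Fin d) → ℝ} (hc : ∀ w, 0 ≤ c w)
    (X : Fin d → (H →L[ℂ] H)) {Y : H →L[ℂ] H} (hY : 0 ≤ Y) (N : ℕ) :
    0 ≤ phiPartial c X Y N :=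
  Finset.sum_nonneg fun _ _ => Finset.sum_nonneg fun _ _ => phiPartial_term_nonneg hc X hY _

namespace IsPhiMap

variable {d : ℕ} {c : List (Fin d) → ℝ} {X : Fin d → (H →L[ℂ] H)}
  {Φ : Module.End ℂ (H →L[ℂ] H)}

theorem map_nonneg (h : IsPhiMap c X Φ) (hc : ∀ w, 0 ≤ c w) {Y : H →L[ℂ] H} (hY : 0 ≤ Y) :
    0 ≤ Φ Y :=
  nonneg_of_tendsto_inner (.of_forall fun N => phiPartial_nonneg hc X hY N) (h Y)

theorem phiPartial_le (h : IsPhiMap c X Φ) (hc : ∀ w, 0 ≤ c w) {Y : H →L[ℂ] H} (hY : 0 ≤ Y)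
    (N : ℕ) : phiPartial c X Y N ≤ Φ Y := by
  rw [← sub_nonneg]
  refine nonneg_of_tendsto_inner (u := fun M => phiPartial c X Y M - phiPartial c X Y N) ?_ ?_
  · filter_upwards [eventually_ge_atTop N] with M hM
    exact sub_nonneg.2 (phiPartial_mono hc X hY hM)
  · intro x y
    simpa [inner_sub_left] using (h Y x y).sub_const ⟪phiPartial c X Y N x, y⟫_ℂ

/-- `Φ` is a module map over operators commuting with the entries of `X`. -/
theorem map_conj (h : IsPhiMap c X Φ) {S : H →L[ℂ] H} (hS : ∀ j, Commute S (X j))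
    (Y : H →L[ℂ] H) :
    Φ (S * Y * ContinuousLinearMap.adjoint S) = S * Φ Y * ContinuousLinearMap.adjoint S := by
  have hw : ∀ w, Commute S (listProd X w) := by
    intro w
    refine Commute.list_prod_right _ _ ?_
    simp only [List.mem_map]
    rintro _ ⟨j, _, rfl⟩
    exact hS j
  have key : ∀ N, phiPartial c X (S * Y * ContinuousLinearMap.adjoint S) N =
      S * phiPartial c X Y N * ContinuousLinearMap.adjoint S := by
    intro N
    simp only [phiPartial, Finset.mul_sum, Finset.sum_mul]
    refine Finset.sum_congr rfl fun l _ => Finset.sum_congr rfl fun w _ => ?_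
    have h1 := (hw (List.ofFn w)).eq
    have h2 := congrArg star h1
    simp only [star_mul, ContinuousLinearMap.star_eq_adjoint] at h2
    rw [mul_smul_comm, smul_mul_assoc]
    congr 1
    simp only [mul_assoc]
    rw [← h2, ← mul_assoc, ← h1]
    simp only [mul_assoc]
  ext x
  refine ext_inner_right ℂ fun y => tendsto_nhds_unique (h _ x y) ?_
  simp_rw [key]
  simpa [← ContinuousLinearMap.adjoint_inner_right] using
    h Y (ContinuousLinearMap.adjoint S x) (ContinuousLinearMap.adjoint S y)

variable {e : ℕ} {b : List (Fin e) → ℝ} {Z : Fin e → (H →L[ℂ] H)}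
  {Ψ : Module.End ℂ (H →L[ℂ] H)}

theorem map_phiPartial (h : IsPhiMap c X Φ) (hZ : ∀ p q, Commute (X p) (Z q))
    (Y : H →L[ℂ] H) (N : ℕ) : Φ (phiPartial b Z Y N) = phiPartial b Z (Φ Y) N := by
  simp only [phiPartial, map_sum, map_smul]
  refine Finset.sum_congr rfl fun l _ => Finset.sum_congr rfl fun w _ => ?_
  rw [h.map_conj]
  intro j
  refine (Commute.list_prod_right _ _ ?_).symm
  simp only [List.mem_map]
  rintro _ ⟨q, _, rfl⟩
  exact hZ j q

theorem comp_le (h : IsPhiMap c X Φ) (h' : IsPhiMap b Z Ψ) (hc : ∀ w, 0 ≤ c w)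
    (hb : ∀ w, 0 ≤ b w) (hZ : ∀ p q, Commute (X p) (Z q)) {Y : H →L[ℂ] H} (hY : 0 ≤ Y) :
    Ψ (Φ Y) ≤ Φ (Ψ Y) := by
  rw [← sub_nonneg]
  refine nonneg_of_tendsto_inner (u := fun N => Φ (Ψ Y) - phiPartial b Z (Φ Y) N) ?_ ?_
  · refine .of_forall fun N => ?_
    rw [← h.map_phiPartial hZ, ← map_sub]
    exact h.map_nonneg hc (sub_nonneg.2 (h'.phiPartial_le hb hY N))
  · intro x y
    simpa [inner_sub_left] using (h' (Φ Y) x y).const_sub ⟪Φ (Ψ Y) x, y⟫_ℂ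

theorem commute (h : IsPhiMap c X Φ) (h' : IsPhiMap b Z Ψ) (hc : ∀ w, 0 ≤ c w)
    (hb : ∀ w, 0 ≤ b w) (hZ : ∀ p q, Commute (X p) (Z q)) : Φ * Ψ = Ψ * Φ := by
  refine LinearMap.ext_on (CStarAlgebra.span_nonneg (A := H →L[ℂ] H)) fun Y hY => ?_
  exact le_antisymm (h'.comp_le h hb hc (fun p q => (hZ q p).symm) hY) (h.comp_le h' hc hb hZ hY)

end IsPhiMap

section Positive

variable {Φ : Module.End ℂ (H →L[ℂ] H)}

theorem monotone_of_map_nonneg (hΦ : ∀ Y, 0 ≤ Y → 0 ≤ Φ Y) : Monotone Φ := fun A B hAB => by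
  simpa using hΦ _ (sub_nonneg.2 hAB)

theorem pow_map_one_le (hΦ : ∀ Y, 0 ≤ Y → 0 ≤ Φ Y) (h1 : Φ 1 ≤ 1) (p : ℕ) :
    (Φ ^ p) 1 ≤ 1 := by
  induction p with
  | zero => simp
  | succ p ih => rw [pow_succ']; exact (monotone_of_map_nonneg hΦ ih).trans h1

theorem sub_map_nonneg_of_sq (hΦ : ∀ Y, 0 ≤ Y → 0 ≤ Φ Y) (h1 : Φ 1 ≤ 1) {V : H →L[ℂ] H}
    {c : ℕ} (hV : V ≤ c • 1) (hV' : -V ≤ c • 1) (h : 0 ≤ (1 - Φ) ((1 - Φ) V)) :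
    0 ≤ (1 - Φ) V := by
  refine nonneg_of_forall_nsmul (B := c • 1 + c • 1) fun n => ?_
  set Z := (1 - Φ) V with hZ
  have hle : ∀ j : ℕ, (Φ ^ j) Z ≤ Z := by
    intro j
    induction j with
    | zero => simp
    | succ j ih =>
      rw [pow_succ']
      exact (monotone_of_map_nonneg hΦ ih).trans (sub_nonneg.1 h)
  have hsum : ∑ j ∈ Finset.range n, (Φ ^ j) Z = V - (Φ ^ n) V := by
    have := congrArg (fun Θ : Module.End ℂ (H →L[ℂ] H) => Θ V) (geom_sum_mul_neg Φ n)
    simpa [hZ, LinearMap.sum_apply] using this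
  have hle2 : V - (Φ ^ n) V ≤ n • Z := by
    rw [← hsum]
    simpa using Finset.sum_le_card_nsmul (Finset.range n) _ Z fun j _ => hle j
  have hpow : (Φ ^ n) V ≤ c • 1 := by
    refine (monotone_of_map_nonneg (pow_map_nonneg hΦ n) hV).trans ?_
    rw [map_nsmul]
    exact nsmul_le_nsmul_right (pow_map_one_le hΦ h1 n) c
  have : V - (Φ ^ n) V + (-V + (Φ ^ n) V) ≤ n • Z + (c • 1 + c • 1) :=
    add_le_add hle2 (add_le_add hV' hpow)
  refine le_trans (le_of_eq ?_) this
  abel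

theorem exists_le_nsmul_one {A : H →L[ℂ] H} (hA : IsSelfAdjoint A) :
    ∃ c : ℕ, A ≤ c • 1 := by
  obtain ⟨c, hc⟩ := exists_nat_ge ‖A‖
  refine ⟨c, hA.le_algebraMap_norm_self.trans ?_⟩
  have : algebraMap ℝ (H →L[ℂ] H) ‖A‖ ≤ algebraMap ℝ (H →L[ℂ] H) c := algebraMap_mono _ hc
  simpa using this

theorem isSelfAdjoint_map (hΦ : ∀ Y, 0 ≤ Y → 0 ≤ Φ Y) {V : H →L[ℂ] H}
    (hV : IsSelfAdjoint V) : IsSelfAdjoint (Φ V) := by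
  obtain ⟨c, hc⟩ := exists_le_nsmul_one hV
  have h1 := hΦ _ (sub_nonneg.2 hc)
  have h2 : 0 ≤ Φ (c • 1) := hΦ _ (nsmul_nonneg zero_le_one c)
  have := (IsSelfAdjoint.of_nonneg h2).sub (IsSelfAdjoint.of_nonneg h1)
  simpa using this

theorem sub_map_nonneg (hΦ : ∀ Y, 0 ≤ Y → 0 ≤ Φ Y) (h1 : Φ 1 ≤ 1) {Y : H →L[ℂ] H}
    (hY : 0 ≤ Y) (m : ℕ) (h : 0 ≤ ((1 - Φ) ^ (m + 1)) Y) : 0 ≤ (1 - Φ) Y := by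
  have hsa : ∀ r : ℕ, IsSelfAdjoint (((1 - Φ) ^ r) Y) := by
    intro r
    induction r with
    | zero => simpa using IsSelfAdjoint.of_nonneg hY
    | succ r ih =>
      rw [pow_succ']
      exact ih.sub (isSelfAdjoint_map hΦ ih)
  induction m with
  | zero => simpa using h
  | succ m ih =>
    apply ih
    obtain ⟨c, hc⟩ := exists_le_nsmul_one (hsa m)
    obtain ⟨c', hc'⟩ := exists_le_nsmul_one (hsa m).neg
    rw [pow_succ', pow_succ'] at h
    rw [pow_succ']
    refine sub_map_nonneg_of_sq hΦ h1 (c := max c c') ?_ ?_ h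
    · exact hc.trans (nsmul_le_nsmul_left zero_le_one (le_max_left _ _))
    · exact hc'.trans (nsmul_le_nsmul_left zero_le_one (le_max_right _ _))

theorem sub_pow_map_nonneg (hΦ : ∀ Y, 0 ≤ Y → 0 ≤ Φ Y) {Y : H →L[ℂ] H}
    (h : 0 ≤ (1 - Φ) Y) (q : ℕ) : 0 ≤ (1 - Φ ^ q) Y := by
  rw [← geom_sum_mul_neg]
  simp only [Module.End.mul_apply, LinearMap.sum_apply]
  exact Finset.sum_nonneg fun j _ => pow_map_nonneg hΦ j _ h

theorem tendsto_apply_zero_of_le {ι : Type*} {l : Filter ι} {A B : ι → (H →L[ℂ] H)}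
    (h0 : ∀ q, 0 ≤ A q) (h1 : ∀ q, A q ≤ 1) (hAB : ∀ q, A q ≤ B q) {x : H}
    (hB : Tendsto (fun q => B q x) l (𝓝 0)) : Tendsto (fun q => A q x) l (𝓝 0) := by
  have key : ∀ q, ‖A q x‖ ^ 2 ≤ ‖B q x‖ * ‖x‖ := by
    intro q
    have hsq : A q * A q ≤ A q := by
      simpa [pow_two] using CStarAlgebra.pow_antitone (h0 q) (h1 q) one_le_two
    have hsub := ((nonneg_iff_inner _).1 (sub_nonneg.2 (hsq.trans (hAB q))) x).1
    have hsa := (IsSelfAdjoint.of_nonneg (h0 q)).adjoint_eq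
    have hinner : ⟪A q (A q x), x⟫_ℂ = ⟪A q x, A q x⟫_ℂ := by
      conv_lhs => rw [← hsa, ContinuousLinearMap.adjoint_inner_left, hsa]
    have hre : (⟪A q x, A q x⟫_ℂ).re = ‖A q x‖ ^ 2 := inner_self_eq_norm_sq (𝕜 := ℂ) _
    have hn : (⟪B q x, x⟫_ℂ).re ≤ ‖B q x‖ * ‖x‖ :=
      (Complex.re_le_norm _).trans (norm_inner_le_norm _ _)
    rw [sub_apply, inner_sub_left, mul_apply_eq_comp, hinner, Complex.sub_re,
      hre] at hsub
    linarith
  have hlim : Tendsto (fun q => ‖B q x‖ * ‖x‖) l (𝓝 0) := by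
    simpa using hB.norm.mul_const ‖x‖
  have h2 := squeeze_zero (fun q => by positivity) key hlim
  rw [tendsto_zero_iff_norm_tendsto_zero]
  have h3 := (Real.continuous_sqrt.tendsto 0).comp h2
  simpa [Function.comp_def] using h3

end Positive

section Products

variable {ι : Type*} [DecidableEq ι] {R : Type*} [CommRing R]
  (ρ : R →+* Module.End ℂ (H →L[ℂ] H)) (φ : ι → R)

theorem prod_nonneg_of_mixed [Fintype ι] (hpos : ∀ i Y, 0 ≤ Y → 0 ≤ ρ (φ i) Y) (h1 : ∀ i, ρ (φ i) 1 ≤ 1)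
    {m : ι → ℕ} (hm : ∀ i, 1 ≤ m i) (q : ι → ℕ)
    (h : ∀ f : ι → R, (∀ i, f i = 1 ∨ f i = (1 - φ i) ^ m i) → 0 ≤ ρ (∏ i, f i) 1)
    (s : Finset ι) (f : ι → R) (hs : ∀ i ∈ s, f i = 1 ∨ f i = 1 - φ i ^ q i)
    (hs' : ∀ i ∉ s, f i = 1 ∨ f i = (1 - φ i) ^ m i) : 0 ≤ ρ (∏ i, f i) 1 := by
  induction s using Finset.induction_on generalizing f with
  | empty => exact h f fun i => hs' i (by simp)
  | insert j s hj ih =>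
    have hupd : ∀ r : R, r = 1 ∨ r = (1 - φ j) ^ m j →
        0 ≤ ρ (r * ∏ i ∈ Finset.univ.erase j, f i) 1 := by
      intro r hr
      have := ih (Function.update f j r) (fun i hi => ?_) (fun i hi => ?_)
      · rwa [Finset.prod_update_of_mem (Finset.mem_univ j), Finset.sdiff_singleton_eq_erase]
          at this
      · have hij : i ≠ j := by rintro rfl; exact hj hi
        simpa [hij] using hs i (Finset.mem_insert_of_mem hi)
      · by_cases hij : i = j
        · subst hij; simpa using hr
        · simpa [hij] using hs' i (by simp [hij, hi])
    rw [← Finset.mul_prod_erase _ _ (Finset.mem_univ j)]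
    rcases hs j (Finset.mem_insert_self j s) with hf | hf
    · rw [hf]; exact hupd 1 (.inl rfl)
    · have hY := hupd 1 (.inl rfl)
      have hZ := hupd _ (.inr rfl)
      rw [one_mul] at hY
      obtain ⟨r, hr⟩ := Nat.exists_eq_add_of_le' (hm j)
      rw [hf]
      rw [hr] at hZ
      simp only [map_mul, map_pow, map_sub, map_one, Module.End.mul_apply] at hZ ⊢
      exact sub_pow_map_nonneg (hpos j) (sub_map_nonneg (hpos j) (h1 j) hY r hZ) _

theorem prod_insert_le (hpos : ∀ i Y, 0 ≤ Y → 0 ≤ ρ (φ i) Y) {q : ι → ℕ}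
    (h : ∀ s : Finset ι, 0 ≤ ρ (∏ i ∈ s, (1 - φ i ^ q i)) 1) (j : ι) (s : Finset ι) :
    ρ (∏ i ∈ insert j s, (1 - φ i ^ q i)) 1 ≤ ρ (∏ i ∈ s, (1 - φ i ^ q i)) 1 := by
  by_cases hj : j ∈ s
  · rw [Finset.insert_eq_of_mem hj]
  · rw [Finset.prod_insert hj]
    simp only [map_mul, map_pow, map_sub, map_one, Module.End.mul_apply, LinearMap.sub_apply,
      Module.End.one_apply]
    exact sub_le_self _ (pow_map_nonneg (hpos j) _ _ (h s))

theorem prod_antitone (hpos : ∀ i Y, 0 ≤ Y → 0 ≤ ρ (φ i) Y) {q : ι → ℕ}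
    (h : ∀ s : Finset ι, 0 ≤ ρ (∏ i ∈ s, (1 - φ i ^ q i)) 1) :
    Antitone fun s : Finset ι => ρ (∏ i ∈ s, (1 - φ i ^ q i)) 1 := by
  intro s t hst
  rw [← Finset.sdiff_union_of_subset hst]
  generalize t \ s = u
  induction u using Finset.induction_on with
  | empty => simp
  | insert j u _ ih =>
    rw [Finset.insert_union]
    exact (prod_insert_le ρ φ hpos h j _).trans ih

theorem tendsto_prod_iff [Fintype ι] (hpos : ∀ i Y, 0 ≤ Y → 0 ≤ ρ (φ i) Y) (h1 : ∀ i, ρ (φ i) 1 ≤ 1)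
    (h : ∀ (q : ι → ℕ) (s : Finset ι), 0 ≤ ρ (∏ i ∈ s, (1 - φ i ^ q i)) 1) :
    (∀ x : H, Tendsto (fun q : ι → ℕ => ρ (∏ i, (1 - φ i ^ q i)) 1 x) atTop (𝓝 x)) ↔
      ∀ i (x : H), Tendsto (fun p : ℕ => (ρ (φ i) ^ p) 1 x) atTop (𝓝 0) := by
  constructor
  · intro hp i x
    have hconst : Tendsto (fun (p : ℕ) (_ : ι) => p) atTop atTop :=
      tendsto_atTop_atTop.2 fun q => ⟨Finset.univ.sup q, fun p hpq j =>
        (Finset.le_sup (Finset.mem_univ j)).trans hpq⟩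
    refine tendsto_apply_zero_of_le
      (B := fun p : ℕ => 1 - ρ (∏ i, (1 - φ i ^ p)) 1)
      (fun p => pow_map_nonneg (hpos i) p _ zero_le_one)
      (fun p => pow_map_one_le (hpos i) (h1 i) p) (fun p => ?_) ?_
    · have := prod_antitone ρ φ hpos (h fun _ => p) (Finset.subset_univ {i})
      simp only [Finset.prod_singleton, map_sub, map_pow, map_one, LinearMap.sub_apply,
        Module.End.one_apply] at this
      exact le_sub_comm.1 this
    · simpa using ((hp x).comp hconst).const_sub x
  · intro hp x
    suffices H : ∀ s : Finset ι,
        Tendsto (fun q : ι → ℕ => ρ (∏ i ∈ s, (1 - φ i ^ q i)) 1 x) atTop (𝓝 x) from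
      H Finset.univ
    intro s
    induction s using Finset.induction_on with
    | empty => simp
    | insert j s hj ih =>
      have hle : ∀ q : ι → ℕ, ρ (∏ i ∈ s, (1 - φ i ^ q i)) 1 ≤ 1 := fun q => by
        simpa using prod_antitone ρ φ hpos (h q) (Finset.empty_subset s)
      have heval : Tendsto (fun q : ι → ℕ => q j) atTop atTop :=
        tendsto_atTop_atTop.2 fun b => ⟨fun _ => b, fun q hq => hq j⟩
      have hmono := fun q : ι → ℕ =>
        monotone_of_map_nonneg (pow_map_nonneg (hpos j) (q j)) (hle q)
      have h0 := tendsto_apply_zero_of_le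
        (A := fun q : ι → ℕ => (ρ (φ j) ^ q j) (ρ (∏ i ∈ s, (1 - φ i ^ q i)) 1))
        (fun q => pow_map_nonneg (hpos j) _ _ (h q s))
        (fun q => (hmono q).trans (pow_map_one_le (hpos j) (h1 j) _))
        hmono ((hp j x).comp heval)
      simpa [Finset.prod_insert hj] using ih.sub h0

end Products

end

/-- **Proposition 1.6 (Popescu).**  A `k`-tuple `T = (T_1, …, T_k) ∈ D_f^m(H)` is pure
(i.e. `(id−Φ_{f_k,T_k}^{q_k}) ⋯ (id−Φ_{f_1,T_1}^{q_1})(I) → I`) if and only if, for each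
`i ∈ {1, …, k}`, `Φ_{f_i,T_i}^p(I) → 0` strongly as `p → ∞`. -/
theorem stmt_4 {H : Type*} [NormedAddCommGroup H] [InnerProductSpace ℂ H] [CompleteSpace H]
    {k : ℕ} {n : Fin k → ℕ} (hn : ∀ i, 1 ≤ n i) {m : Fin k → ℕ} (hm : ∀ i, 1 ≤ m i)
    (a : ∀ i, List (Fin (n i)) → ℝ) (ha : ∀ i, PosRegCoeffs (a i))
    (T : ∀ i, Fin (n i) → (H →L[ℂ] H)) (hT : CommutingTuples T)
    (Φ : Fin k → Module.End ℂ (H →L[ℂ] H))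
    (hΦ : ∀ i, IsPhiMap (a i) (T i) (Φ i))
    (hcontr : ∀ i, ((1 : H →L[ℂ] H) - Φ i 1).IsPositive)
    (hmem : ∀ ε : Fin k → Bool, ((Delta Φ fun i => if ε i then m i else 0) 1).IsPositive) :
    IsPure Φ ↔
      ∀ i (x : H), Tendsto (fun p : ℕ => (((Φ i) ^ p) (1 : H →L[ℂ] H)) x) atTop (𝓝 0) := by
  have hpos : ∀ i Y, 0 ≤ Y → 0 ≤ Φ i Y := fun i Y hY => (hΦ i).map_nonneg (ha i).1 hY
  have hone : ∀ i, Φ i 1 ≤ 1 := fun i => (ContinuousLinearMap.le_def _ _).2 (hcontr i)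
  have hcomm : ∀ i j, Φ i * Φ j = Φ j * Φ i := by
    intro i j
    by_cases hij : i = j
    · rw [hij]
    · exact (hΦ i).commute (hΦ j) (ha i).1 (ha j).1 (hT i j hij)
  have hmul : IsMulCommutative (Subring.closure (Set.range Φ)) := Subring.isMulCommutative_closure (by
    rintro _ ⟨i, rfl⟩ _ ⟨j, rfl⟩
    exact hcomm i j)
  let _ : CommRing (Subring.closure (Set.range Φ)) :=
    { (inferInstance : Ring (Subring.closure (Set.range Φ))) with
      mul_comm := hmul.is_comm.comm }
  let ρ : Subring.closure (Set.range Φ) →+* Module.End ℂ (H →L[ℂ] H) :=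
    (Subring.closure (Set.range Φ)).subtype
  let φ : Fin k → Subring.closure (Set.range Φ) :=
    fun i => ⟨Φ i, Subring.subset_closure ⟨i, rfl⟩⟩
  have hφ : ∀ i, ρ (φ i) = Φ i := fun i => rfl
  have hprod : ∀ f : Fin k → Subring.closure (Set.range Φ),
      ρ (∏ i, f i) = (List.ofFn fun i => ρ (f i)).prod := by
    intro f
    rw [← List.prod_ofFn, map_list_prod, List.map_ofFn]
    rfl
  have hnonneg : ∀ (q : Fin k → ℕ) (s : Finset (Fin k)),
      0 ≤ ρ (∏ i ∈ s, (1 - φ i ^ q i)) 1 := by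
    intro q s
    have hs : ∏ i ∈ s, (1 - φ i ^ q i) = ∏ i, if i ∈ s then 1 - φ i ^ q i else 1 := by
      rw [Finset.prod_ite_mem, Finset.univ_inter]
    rw [hs]
    refine prod_nonneg_of_mixed ρ φ hpos hone hm q (fun f hf => ?_) Finset.univ _
      (fun i _ => ?_) (by simp)
    · classical
      have hf' : ∀ i, ρ (f i) = (1 - Φ i) ^ (if decide (f i ≠ 1) then m i else 0) := by
        intro i
        by_cases hi : f i = 1
        · simp [hi]
        · have := (hf i).resolve_left hi
          simp only [ne_eq, hi, not_false_eq_true, decide_true, if_true]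
          rw [this, map_pow, map_sub, map_one, hφ]
      rw [hprod, ContinuousLinearMap.nonneg_iff_isPositive]
      simp only [hf']
      exact hmem fun i => decide (f i ≠ 1)
    · by_cases hi : i ∈ s <;> simp [hi]
  have hpure : IsPure Φ ↔
      ∀ x : H, Tendsto (fun q : Fin k → ℕ => ρ (∏ i, (1 - φ i ^ q i)) 1 x) atTop (𝓝 x) := by
    simp only [IsPure, DeltaPow, hprod, map_sub, map_pow, map_one, hφ]
  rw [hpure]
  exact tendsto_prod_iff ρ φ hpos hone hnonneg

end NC
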